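/- arXiv:1612.06134 — 3 statements merged into one kernel-verified Lean document; each statement's English description precedes it below -/
import Mathlib

section
/- Let k ∈ (0,1), α ∈ (0,∞), and let f : [0,∞) → [0,∞) be locally Lipschitz continuous and satisfy f′(t) + α·f(t)^k ≤ 0 for almost every t ∈ (0,∞). Set T* := f(0)^(1−k) / (α(1−k)). Then f(t) = 0 for all t ∈ [T*, ∞). -/
open MeasureTheory Set

/-!
As long as `f` is positive, `g = f ^ (1 - k)` satisfies
`g' = (1 - k) f ^ (-k) f' ≤ -α (1 - k)` almost everywhere, so `g` loses at least `α (1 - k)` per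
unit of time and cannot stay positive up to time `T* = f 0 ^ (1 - k) / (α (1 - k))`.

To make this rigorous, suppose `f t > 0` for some `t ≥ T*`. The inequality gives `f' ≤ 0` almost
everywhere, so `f` is nonincreasing and `f ≥ f t > 0` on `[0, t]`. There `x ↦ x ^ (1 - k)` is only
evaluated away from its singularity at `0`, so `g` is Lipschitz on `[0, t]` and can be recovered
from its almost-everywhere derivative (`le_sub_of_ae_hasDerivAt_le`). This yields
`g t ≤ g 0 - α (1 - k) t ≤ 0`, a contradiction.
-/

/-- A Lipschitz function whose derivative is almost everywhere at most `-C` decreases with rate at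
least `C`: a Lipschitz function is absolutely continuous, hence the integral of its derivative. -/
lemma le_sub_of_ae_hasDerivAt_le {h : ℝ → ℝ} {a b C : ℝ} {L : NNReal} (hab : a ≤ b)
    (hL : LipschitzOnWith L h (Icc a b))
    (hd : ∀ᵐ t ∂(volume.restrict (Icc a b)), ∃ d : ℝ, HasDerivAt h d t ∧ d ≤ -C) :
    h b ≤ h a - C * (b - a) := by
  have hac : AbsolutelyContinuousOnInterval h a b :=
    LipschitzOnWith.absolutelyContinuousOnInterval (K := L) (by rwa [uIcc_of_le hab])
  have hle : ∫ t in a..b, deriv h t ≤ ∫ _ in a..b, -C := by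
    refine intervalIntegral.integral_mono_ae_restrict hab hac.intervalIntegrable_deriv
      intervalIntegrable_const ?_
    filter_upwards [hd] with t ⟨d, hd, hdC⟩
    rwa [hd.deriv]
  rw [hac.integral_deriv_eq_sub, intervalIntegral.integral_const, smul_eq_mul] at hle
  linarith

/-- Let `k ∈ (0,1)`, `α ∈ (0,∞)`, and let `f : [0,∞) → [0,∞)` be locally Lipschitz
continuous and satisfy `f′(t) + α·f(t)^k ≤ 0` for almost every `t ∈ (0,∞)`.
Set `T* := f(0)^(1−k) / (α(1−k))`. Then `f(t) = 0` for all `t ∈ [T*, ∞)`. -/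
theorem extinction_of_ode_subsolution
    (k α : ℝ) (hk₀ : 0 < k) (hk₁ : k < 1) (hα : 0 < α)
    (f : ℝ → ℝ)
    (hf_nonneg : ∀ t : ℝ, 0 ≤ t → 0 ≤ f t)
    (hf_lip : ∀ T : ℝ, 0 < T → ∃ L : NNReal, LipschitzOnWith L f (Set.Icc 0 T))
    (hf_deriv : ∀ᵐ t ∂(volume.restrict (Set.Ioi (0 : ℝ))),
      ∃ d : ℝ, HasDerivAt f d t ∧ d + α * f t ^ k ≤ 0) :
    ∀ t : ℝ, f 0 ^ (1 - k) / (α * (1 - k)) ≤ t → f t = 0 := by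
  intro t ht
  have hk : 0 < 1 - k := sub_pos.2 hk₁
  have hc : 0 < α * (1 - k) := mul_pos hα hk
  have hf0 := hf_nonneg 0 le_rfl
  have ht0 : 0 ≤ t := (div_nonneg (Real.rpow_nonneg hf0 _) hc.le).trans ht
  have htc : f 0 ^ (1 - k) ≤ t * (α * (1 - k)) := (div_le_iff₀ hc).1 ht
  by_contra hne
  have hpos : 0 < f t := lt_of_le_of_ne (hf_nonneg t ht0) (Ne.symm hne)
  rcases ht0.eq_or_lt with rfl | ht1
  · have := Real.rpow_pos_of_pos hpos (1 - k)
    linarith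
  obtain ⟨L, hL⟩ := hf_lip t ht1
  have hae : ∀ᵐ s ∂(volume.restrict (Icc 0 t)),
      ∃ d : ℝ, HasDerivAt f d s ∧ d + α * f s ^ k ≤ 0 := by
    rw [← restrict_Ioc_eq_restrict_Icc]
    exact ae_restrict_of_ae_restrict_of_subset Ioc_subset_Ioi_self hf_deriv
  have hmono : ∀ a b, 0 ≤ a → a ≤ b → b ≤ t → f b ≤ f a := by
    intro a b ha hab hb
    have hsub : Icc a b ⊆ Icc 0 t := Icc_subset_Icc ha hb
    have h := le_sub_of_ae_hasDerivAt_le (C := 0) hab (hL.mono hsub) (by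
      filter_upwards [ae_restrict_of_ae_restrict_of_subset hsub hae,
        ae_restrict_mem measurableSet_Icc] with s ⟨d, hd, hle⟩ hs
      have := mul_nonneg hα.le (Real.rpow_nonneg (hf_nonneg s (ha.trans hs.1)) k)
      exact ⟨d, hd, by linarith⟩)
    linarith
  have hmaps : MapsTo f (Icc 0 t) (Icc (f t) (f 0)) := fun s hs =>
    ⟨hmono s t hs.1 hs.2 le_rfl, hmono 0 s le_rfl hs.1 hs.2⟩
  obtain ⟨M, hM⟩ : ∃ M, LipschitzOnWith M (fun x : ℝ => x ^ (1 - k)) (Icc (f t) (f 0)) := by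
    refine ContDiffOn.exists_lipschitzOnWith (n := 1) (fun x hx => ?_) one_ne_zero
      (convex_Icc _ _) isCompact_Icc
    exact (Real.contDiffAt_rpow_const_of_ne (hpos.trans_le hx.1).ne').contDiffWithinAt
  have key := le_sub_of_ae_hasDerivAt_le (C := α * (1 - k)) ht0 (hM.comp hL hmaps) (by
    filter_upwards [hae, ae_restrict_mem measurableSet_Icc] with s ⟨d, hd, hle⟩ hs
    have hfs : 0 < f s := hpos.trans_le (hmaps hs).1
    refine ⟨_, hd.rpow_const (Or.inl hfs.ne'), ?_⟩
    have hp : 0 < f s ^ (-k) := Real.rpow_pos_of_pos hfs _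
    have h1 : f s ^ k * f s ^ (-k) = 1 := by
      rw [← Real.rpow_add hfs, add_neg_cancel, Real.rpow_zero]
    have h2 : d * f s ^ (-k) ≤ -α := by
      have := mul_nonpos_of_nonpos_of_nonneg hle hp.le
      linear_combination this - α * h1
    rw [show (1 - k - 1 : ℝ) = -k by ring]
    linear_combination (1 - k) * h2)
  have hgt := Real.rpow_pos_of_pos hpos (1 - k)
  simp only [Function.comp_apply] at key
  linarith
end

section
/- Let k ∈ (0,1), α ∈ (0,∞), and let f, f̃ : [0,∞) → [0,∞) be locally Lipschitz continuous with f(0) = f̃(0). Assume f′(t) = −α·f(t)^k for almost every t ∈ (0,∞) and f̃′(t) ≤ −α·f̃(t)^k for almost every t ∈ (0,∞). Then 0 ≤ f̃(t) ≤ f(t) for all t ∈ [0,∞). -/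
/-!
Put `g = ftilde - f`, a Lipschitz function on `[0, T]` with `g 0 = 0`. If `g T > 0`, let `s` be the
last time in `[0, T]` with `g s ≤ 0`. On `(s, T]` one has `f < ftilde`, and `x ↦ x ^ k` is monotone
on `[0, ∞)`, so `g' ≤ 0` almost everywhere there. As `g` is absolutely continuous,
`g T - g s = ∫ g' ≤ 0`, a contradiction. The failure of Lipschitz continuity of `x ^ k` at `0` is
harmless: the argument uses only that the right-hand side is decreasing.
-/

open MeasureTheory Set

/-- A Lipschitz function that starts nonpositive, and whose derivative is nonpositive almost
everywhere on the set where it is positive, stays nonpositive. -/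
theorem nonpos_of_deriv_nonpos_of_pos {g : ℝ → ℝ} {T : ℝ} {L : NNReal} (hT : 0 ≤ T)
    (hg : LipschitzOnWith L g (Set.Icc 0 T)) (h0 : g 0 ≤ 0)
    (hd : ∀ᵐ t ∂(volume.restrict (Set.Ioc (0 : ℝ) T)), 0 < g t → deriv g t ≤ 0) :
    g T ≤ 0 := by
  have hclosed : IsClosed (Set.Icc 0 T ∩ g ⁻¹' Set.Iic 0) :=
    hg.continuousOn.preimage_isClosed_of_isClosed isClosed_Icc isClosed_Iic
  obtain ⟨s, ⟨⟨hs0, hsT⟩, hgs⟩, hmax⟩ :=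
    (isCompact_Icc.of_isClosed_subset hclosed inter_subset_left).exists_isGreatest
      ⟨0, ⟨le_rfl, hT⟩, h0⟩
  have hac : AbsolutelyContinuousOnInterval g s T := by
    apply LipschitzOnWith.absolutelyContinuousOnInterval (K := L)
    rw [uIcc_of_le hsT]
    exact hg.mono (Icc_subset_Icc_left hs0)
  have hint : ∫ t in s..T, deriv g t ≤ 0 := by
    rw [intervalIntegral.integral_of_le hsT]
    apply integral_nonpos_of_ae
    filter_upwards [ae_restrict_of_ae_restrict_of_subset (Ioc_subset_Ioc_left hs0) hd,
      ae_restrict_mem measurableSet_Ioc] with t ht hst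
    refine ht (lt_of_not_ge fun hneg => ?_)
    exact absurd (hmax ⟨⟨hs0.trans hst.1.le, hst.2⟩, hneg⟩) (not_le.mpr hst.1)
  rw [hac.integral_deriv_eq_sub] at hint
  have : g s ≤ 0 := hgs
  linarith

/-- Let `k ∈ (0,1)`, `α ∈ (0,∞)`, and let `f, f̃ : [0,∞) → [0,∞)` be locally Lipschitz
continuous with `f(0) = f̃(0)`. Assume `f′(t) = −α·f(t)^k` for almost every `t ∈ (0,∞)`
and `f̃′(t) ≤ −α·f̃(t)^k` for almost every `t ∈ (0,∞)`.
Then `0 ≤ f̃(t) ≤ f(t)` for all `t ∈ [0,∞)`. -/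
theorem ode_comparison_principle
    (k α : ℝ) (hk₀ : 0 < k) (hk₁ : k < 1) (hα : 0 < α)
    (f ftilde : ℝ → ℝ)
    (hf_nonneg : ∀ t : ℝ, 0 ≤ t → 0 ≤ f t)
    (hftilde_nonneg : ∀ t : ℝ, 0 ≤ t → 0 ≤ ftilde t)
    (hf_lip : ∀ T : ℝ, 0 < T → ∃ L : NNReal, LipschitzOnWith L f (Set.Icc 0 T))
    (hftilde_lip : ∀ T : ℝ, 0 < T → ∃ L : NNReal, LipschitzOnWith L ftilde (Set.Icc 0 T))
    (h0 : f 0 = ftilde 0)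
    (hf_deriv : ∀ᵐ t ∂(volume.restrict (Set.Ioi (0 : ℝ))),
      ∃ d : ℝ, HasDerivAt f d t ∧ d = -(α * f t ^ k))
    (hftilde_deriv : ∀ᵐ t ∂(volume.restrict (Set.Ioi (0 : ℝ))),
      ∃ d : ℝ, HasDerivAt ftilde d t ∧ d ≤ -(α * ftilde t ^ k)) :
    ∀ t : ℝ, 0 ≤ t → 0 ≤ ftilde t ∧ ftilde t ≤ f t := by
  intro T hT
  refine ⟨hftilde_nonneg T hT, ?_⟩
  obtain rfl | hT' := hT.eq_or_lt
  · exact h0.ge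
  obtain ⟨L₁, h₁⟩ := hf_lip T hT'
  obtain ⟨L₂, h₂⟩ := hftilde_lip T hT'
  refine sub_nonpos.mp (nonpos_of_deriv_nonpos_of_pos (g := fun t => ftilde t - f t) hT
    (h₂.sub h₁) (by simp [h0]) ?_)
  have hsub : Set.Ioc 0 T ⊆ Set.Ioi (0 : ℝ) := fun t ht => ht.1
  filter_upwards [ae_restrict_of_ae_restrict_of_subset hsub hf_deriv,
    ae_restrict_of_ae_restrict_of_subset hsub hftilde_deriv,
    ae_restrict_mem measurableSet_Ioc] with t ⟨d, hd, hde⟩ ⟨e, he, hee⟩ ht hpos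
  rw [(he.fun_sub hd).deriv]
  have hpow : f t ^ k ≤ ftilde t ^ k :=
    Real.rpow_le_rpow (hf_nonneg t ht.1.le) (sub_pos.mp hpos).le hk₀.le
  linarith [mul_le_mul_of_nonneg_left hpow hα.le]
end

section
/- Let k ∈ (0,1), α ∈ (0,∞), and let f : [0,∞) → [0,∞) be locally Lipschitz continuous and satisfy f′(t) = −α·f(t)^k for almost every t ∈ (0,∞). Then f(t) = 0 for all t ≥ f(0)^(1−k) / (α(1−k)). -/
/-!
On any interval where `f` stays positive, `f ^ (1 - k)` is locally Lipschitz with almost everywhere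
derivative `(1 - k) * f ^ (-k) * f' = -α * (1 - k)`, so it decreases linearly with slope
`-α * (1 - k)` and must reach zero by the claimed time.

To make this rigorous, suppose `f T > 0`. As `f' ≤ 0` almost everywhere and `f` is absolutely
continuous, `f` is nonincreasing on `[0, T]` (`antitone_of_ae_deriv_nonpos`), hence bounded below by
`f T > 0` there. The map `x ↦ x ^ (1 - k)` is `C¹`, hence Lipschitz, on `[f T, f 0]`, so
`t ↦ f t ^ (1 - k) + α * (1 - k) * t` is absolutely continuous with zero derivative almost
everywhere, that is, constant. Comparing the values at `0` and `T` gives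
`T < f 0 ^ (1 - k) / (α * (1 - k))`.
-/

open MeasureTheory Set

/-- A Lipschitz function on `[0, T]` whose derivative is almost everywhere nonpositive is
nonincreasing, by the fundamental theorem of calculus for absolutely continuous functions. -/
lemma antitone_of_ae_deriv_nonpos {f : ℝ → ℝ} {T : ℝ} {L : NNReal}
    (hL : LipschitzOnWith L f (Icc 0 T))
    (hd : ∀ᵐ t ∂(volume.restrict (Ioi (0 : ℝ))), deriv f t ≤ 0) :
    AntitoneOn f (Icc 0 T) := by
  intro a ha b hb hab
  have hsub : uIcc a b ⊆ Icc 0 T := by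
    rw [uIcc_of_le hab]
    exact Icc_subset_Icc ha.1 hb.2
  have hint := (hL.mono hsub).absolutelyContinuousOnInterval.integral_deriv_eq_sub
  have hae : ∀ᵐ t ∂(volume.restrict (Ioc a b)), deriv f t ≤ 0 :=
    ae_restrict_of_ae_restrict_of_subset (fun t ht => lt_of_le_of_lt ha.1 ht.1) hd
  have hle : ∫ t in a..b, deriv f t ≤ 0 := by
    rw [intervalIntegral.integral_of_le hab]
    exact integral_nonpos_of_ae hae
  linarith

/-- Let `k ∈ (0,1)`, `α ∈ (0,∞)`, and let `f : [0,∞) → [0,∞)` be locally Lipschitz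
continuous and satisfy `f′(t) = −α·f(t)^k` for almost every `t ∈ (0,∞)`.
Then `f(t) = 0` for all `t ≥ f(0)^(1−k) / (α(1−k))`. -/
theorem extinction_of_ode_solution
    (k α : ℝ) (hk₀ : 0 < k) (hk₁ : k < 1) (hα : 0 < α)
    (f : ℝ → ℝ)
    (hf_nonneg : ∀ t : ℝ, 0 ≤ t → 0 ≤ f t)
    (hf_lip : ∀ T : ℝ, 0 < T → ∃ L : NNReal, LipschitzOnWith L f (Set.Icc 0 T))
    (hf_deriv : ∀ᵐ t ∂(volume.restrict (Set.Ioi (0 : ℝ))),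
      ∃ d : ℝ, HasDerivAt f d t ∧ d = -(α * f t ^ k)) :
    ∀ t : ℝ, f 0 ^ (1 - k) / (α * (1 - k)) ≤ t → f t = 0 := by
  intro T hT
  have hk : 0 < 1 - k := sub_pos.2 hk₁
  have hαk : 0 < α * (1 - k) := mul_pos hα hk
  have hf0 : 0 ≤ f 0 := hf_nonneg 0 le_rfl
  have hT0 : 0 ≤ T := le_trans (by positivity) hT
  rw [div_le_iff₀ hαk] at hT
  -- The Lipschitz hypothesis needs `0 < T`; for `T = 0` the bound itself forces `f 0 = 0`.
  rcases hT0.eq_or_lt with rfl | hTpos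
  · rw [zero_mul] at hT
    by_contra hne
    exact absurd hT (not_le.2 (Real.rpow_pos_of_pos (lt_of_le_of_ne hf0 (Ne.symm hne)) _))
  by_contra hne
  have hfT : 0 < f T := lt_of_le_of_ne (hf_nonneg T hT0) (Ne.symm hne)
  obtain ⟨L, hL⟩ := hf_lip T hTpos
  have hanti : AntitoneOn f (Icc 0 T) := by
    refine antitone_of_ae_deriv_nonpos hL ?_
    filter_upwards [hf_deriv, ae_restrict_mem measurableSet_Ioi] with t ht ht0
    obtain ⟨d, hd, rfl⟩ := ht
    have := hf_nonneg t (le_of_lt ht0)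
    rw [hd.deriv, neg_nonpos]
    positivity
  have hmaps : MapsTo f (Icc 0 T) (Icc (f T) (f 0)) := fun t ht =>
    ⟨hanti ht (right_mem_Icc.2 hT0) ht.2, hanti (left_mem_Icc.2 hT0) ht ht.1⟩
  obtain ⟨K, hK⟩ : ∃ K, LipschitzOnWith K (fun x : ℝ => x ^ (1 - k)) (Icc (f T) (f 0)) := by
    refine ContDiffOn.exists_lipschitzOnWith (n := 1) ?_ one_ne_zero (convex_Icc _ _)
      isCompact_Icc
    exact contDiffOn_id.rpow_const_of_ne fun x hx => (hfT.trans_le hx.1).ne'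
  have hlip := hK.comp hL hmaps
  rw [← uIcc_of_le hT0] at hlip
  have hac : AbsolutelyContinuousOnInterval
      (((fun x : ℝ => x ^ (1 - k)) ∘ f) + fun t => α * (1 - k) * t) 0 T := by
    refine hlip.absolutelyContinuousOnInterval.add
      (ContDiffOn.absolutelyContinuousOnInterval ?_)
    fun_prop
  have hzero : ∀ᵐ t, t ∈ uIcc 0 T → HasDerivAt
      (((fun x : ℝ => x ^ (1 - k)) ∘ f) + fun t => α * (1 - k) * t) 0 t := by
    have h0 : ∀ᵐ t : ℝ, t ≠ 0 := by simp [ae_iff]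
    filter_upwards [(ae_restrict_iff' measurableSet_Ioi).1 hf_deriv, h0] with t ht hne0 htT
    rw [uIcc_of_le hT0] at htT
    obtain ⟨d, hd, rfl⟩ := ht (lt_of_le_of_ne htT.1 hne0.symm)
    have hft : 0 < f t := hfT.trans_le (hmaps htT).1
    have h1 := (hd.rpow_const (p := 1 - k) (Or.inl hft.ne')).add
      ((hasDerivAt_id t).const_mul (α * (1 - k)))
    refine h1.congr_deriv ?_
    have h2 : f t ^ k * f t ^ (1 - k - 1) = 1 := by
      rw [← Real.rpow_add hft]
      simp
    -- The powers of `f t` in the chain rule cancel, leaving slope `-α * (1 - k)`.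
    linear_combination (-(α * (1 - k))) * h2
  obtain ⟨C, hC⟩ := hac.const_of_ae_hasDerivAt_zero hzero
  have e0 := hC 0 left_mem_uIcc
  have eT := hC T right_mem_uIcc
  simp only [Pi.add_apply, Function.comp_apply] at e0 eT
  have := Real.rpow_pos_of_pos hfT (1 - k)
  linarith
end
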